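/- Let m = 2 and let G^1_1, G^1_2, G^2_1, G^2_2 ∈ ℂ[z]. Set A_i = [[0, 1], [G^i_2, G^i_1 + ψ′]] for i = 1, 2. Suppose g = [[a, 0], [c, b]] with a, b nonzero complex constants and c ∈ ℂ[z] a polynomial, and suppose ψ·(dg/dz) = g·A_2 − A_1·g. Then c = 0, a = b, G^1_1 = G^2_1 and G^1_2 = G^2_2; in particular g is a scalar multiple of the identity and A_1 = A_2. -/

import Mathlib

open Polynomial Matrix

/-!
The first row `(0, 1)` of a companion matrix makes the first row of the gauge relation read
`ψ a' = -c` and `0 = a - b`. As `a` is constant, `g` is the scalar matrix `a • 1`; a constant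
scalar has zero derivative, so the relation reduces to `a A₂ = a A₁`, and `a` cancels.
-/

section Gauge

variable {R S ι : Type*} [CommSemiring R] [CommRing S] [Algebra R S]

/-- The modified companion matrix of `w'' = (G₁ / ψ) w' + (G₂ / ψ²) w` over a commutative ring
with derivation `D`, that is, the matrix of the system satisfied by `(w, ψ w')` multiplied
by `ψ`. -/
def modifiedCompanion (D : Derivation R S S) (ψ G₁ G₂ : S) : Matrix (Fin 2) (Fin 2) S :=
  !![0, 1; G₂, G₁ + D ψ]

/-- The relation `ψ g' = g A₂ - A₁ g` expressing that `g` takes the connection `d - (A₁ / ψ) dz`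
to `d - (A₂ / ψ) dz`, with `ψ` cleared from the denominators. Invertibility of `g` is not part of
the relation. -/
def GaugeRelation [Fintype ι] (D : Derivation R S S) (ψ : S) (A₁ A₂ g : Matrix ι ι S) : Prop :=
  ψ • g.map D = g * A₂ - A₁ * g

variable {D : Derivation R S S} {ψ : S}

theorem modifiedCompanion_inj {G₁ G₂ H₁ H₂ : S} :
    modifiedCompanion D ψ G₁ G₂ = modifiedCompanion D ψ H₁ H₂ ↔ G₁ = H₁ ∧ G₂ = H₂ := by
  simp [modifiedCompanion, and_comm]

namespace GaugeRelation

variable {u₁ v₁ u₂ v₂ a b c : S}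

theorem lower_left_eq (h : GaugeRelation D ψ !![0, 1; u₁, v₁] !![0, 1; u₂, v₂] !![a, 0; c, b]) :
    c = -(ψ * D a) := by
  have entry : ψ * D a = -c := by simpa using congrFun₂ h 0 0
  rw [entry, neg_neg]

theorem diagonal_eq (h : GaugeRelation D ψ !![0, 1; u₁, v₁] !![0, 1; u₂, v₂] !![a, 0; c, b]) :
    a = b := by
  have entry : 0 = a - b := by simpa using congrFun₂ h 0 1
  exact sub_eq_zero.mp entry.symm

theorem eq_of_constant_scalar [Fintype ι] [DecidableEq ι] {A₁ A₂ : Matrix ι ι S}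
    (h : GaugeRelation D ψ A₁ A₂ (a • (1 : Matrix ι ι S))) (hDa : D a = 0)
    (ha : IsSMulRegular S a) : A₁ = A₂ := by
  have deriv_eq_zero : (a • (1 : Matrix ι ι S)).map D = 0 := by
    ext i j
    by_cases hij : i = j <;> simp [hij, hDa]
  have smul_eq : 0 = a • A₂ - a • A₁ := by
    simpa [GaugeRelation, deriv_eq_zero] using h
  exact ha.matrix (sub_eq_zero.mp smul_eq.symm).symm

end GaugeRelation

theorem rank_two_gauge_is_scalar_general {G₁₁ G₁₂ G₂₁ G₂₂ a b c : S} (hDa : D a = 0)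
    (ha : IsSMulRegular S a)
    (h : GaugeRelation D ψ (modifiedCompanion D ψ G₁₁ G₁₂) (modifiedCompanion D ψ G₂₁ G₂₂)
      !![a, 0; c, b]) :
    c = 0 ∧ a = b ∧ G₁₁ = G₂₁ ∧ G₁₂ = G₂₂ ∧
      modifiedCompanion D ψ G₁₁ G₁₂ = modifiedCompanion D ψ G₂₁ G₂₂ := by
  obtain rfl : a = b := h.diagonal_eq
  obtain rfl : c = 0 := by simpa [hDa] using h.lower_left_eq
  have scalar : !![a, 0; 0, a] = a • (1 : Matrix (Fin 2) (Fin 2) S) := by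
    simp [Matrix.one_fin_two]
  have companions_eq := (scalar ▸ h).eq_of_constant_scalar hDa ha
  obtain ⟨hG₁, hG₂⟩ := modifiedCompanion_inj.mp companions_eq
  exact ⟨rfl, rfl, hG₁, hG₂, companions_eq⟩

end Gauge

/-- The rank-2 case of the gauge-uniqueness statement: if
`g = [[a,0],[c,b]]` (with `a, b` nonzero constants, `c` a polynomial) satisfies
`ψ·g' = g·A₂ − A₁·g` for the modified companion matrices
`Aᵢ = [[0,1],[Gᵢ₂, Gᵢ₁ + ψ']]`, then `c = 0`, `a = b`, `G¹₁ = G²₁`, `G¹₂ = G²₂`;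
in particular `g` is a scalar multiple of the identity and `A₁ = A₂`. -/
theorem rank_two_gauge_is_scalar
    (n : ℕ) (hn : 2 ≤ n) (p : Fin n → ℂ) (hp : Function.Injective p)
    (ψ : Polynomial ℂ) (hψ : ψ = ∏ i, (X - C (p i)))
    (G₁₁ G₁₂ G₂₁ G₂₂ : Polynomial ℂ)
    (A₁ A₂ : Matrix (Fin 2) (Fin 2) (Polynomial ℂ))
    (hA₁ : A₁ = !![0, 1; G₁₂, G₁₁ + ψ.derivative])
    (hA₂ : A₂ = !![0, 1; G₂₂, G₂₁ + ψ.derivative])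
    (a b : ℂ) (ha : a ≠ 0) (hb : b ≠ 0) (c : Polynomial ℂ)
    (g : Matrix (Fin 2) (Fin 2) (Polynomial ℂ))
    (hg : g = !![C a, 0; c, C b])
    (hgauge : ψ • g.map (fun q => q.derivative) = g * A₂ - A₁ * g) :
    c = 0 ∧ a = b ∧ G₁₁ = G₂₁ ∧ G₁₂ = G₂₂ ∧ A₁ = A₂ := by
  subst hA₁ hA₂ hg
  simpa only [C_inj] using! rank_two_gauge_is_scalar_general (D := derivative' (R := ℂ)) (ψ := ψ)
    derivative_C (.of_ne_zero (C_ne_zero.mpr ha)) hgauge
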